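/- arXiv:1203.0334 — 2 statements merged into one kernel-verified Lean document; each statement's English description precedes it below -/
import Mathlib

section
/- For every natural number n, the set Lin(n) of words having a linear decomposition with at most n members is finite. -/
/-!
Every member of a linear decomposition is a factor of a word of `D_τ` (`IsLinDecomp.factor_of_dTau`).
Since `D_τ` is finite and a word has only finitely many factors, the members come from a finite
set; a word of `Lin(n)` is a concatenation of at most `n` of them, and there are only finitely many
such concatenations.
-/

namespace SqFreePaper

variable {A : Type*}

/-- A word is square-free if it contains no nonempty factor of the form `s ++ s`. -/
def IsSquareFreeWord (w : List A) : Prop :=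
  ∀ u s v : List A, w = u ++ s ++ s ++ v → s = []

/-- One-step rewriting relation associated with a system of defining relations `π`. -/
def OneStep (π : List A → List A → Prop) (x y : List A) : Prop :=
  ∃ r s u v : List A, x = r ++ u ++ s ∧ y = r ++ v ++ s ∧ (π u v ∨ π v u)

/-- The congruence `=_π` generated by `π`: reflexive-transitive closure of one-step rewriting. -/
def EqRel (π : List A → List A → Prop) : List A → List A → Prop :=
  Relation.ReflTransGen (OneStep π)

/-- `w` is square-free relative to `π`: every word in its `=_π`-class is square-free. -/
def SFRel (π : List A → List A → Prop) (w : List A) : Prop :=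
  ∀ z, EqRel π w z → IsSquareFreeWord z

/-- Union of two systems of defining relations. -/
def PiRel (σ ρ : List A → List A → Prop) (x y : List A) : Prop := σ x y ∨ ρ x y

/-- The set of defining words of a system `σ`. -/
def DWords (σ : List A → List A → Prop) : Set (List A) :=
  {x | ∃ y, σ x y ∨ σ y x}

/-- The closure of `D_σ` under the congruence `=_ρ`. -/
def ClosureD (σ ρ : List A → List A → Prop) : Set (List A) :=
  {x | ∃ w ∈ DWords σ, EqRel ρ w x}

/-- The system `{(u_i, u_j) : i < j}` determined by a finite family of words. -/
def FamilyRel {n : ℕ} (u : Fin n → List A) (x y : List A) : Prop :=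
  ∃ i j : Fin n, i < j ∧ x = u i ∧ y = u j

/-- `x ~ y` iff both lie in `D̄_σ` or both lie in `D̄_ρ`. -/
def Sim (σ ρ : List A → List A → Prop) (x y : List A) : Prop :=
  (x ∈ ClosureD σ ρ ∧ y ∈ ClosureD σ ρ) ∨ (x ∈ ClosureD ρ σ ∧ y ∈ ClosureD ρ σ)

/-- `D_τ = D̄_σ ∪ D̄_ρ`. -/
def DTau (σ ρ : List A → List A → Prop) : Set (List A) :=
  ClosureD σ ρ ∪ ClosureD ρ σ

/-- The concatenation `x_a ++ x_{a+1} ++ ⋯ ++ x_{a+len-1}`. -/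
def wordSeg (x : ℕ → List A) (a len : ℕ) : List A :=
  ((List.range' a len).map x).flatten

/-- Standing hypotheses of the paper: `D̄_σ`, `D̄_ρ` are finite, nonempty, disjoint,
and closed under `=_σ`, `=_ρ` respectively. -/
def SettingHyps (σ ρ : List A → List A → Prop) : Prop :=
  (ClosureD σ ρ).Finite ∧ (ClosureD ρ σ).Finite ∧
  (ClosureD σ ρ).Nonempty ∧ (ClosureD ρ σ).Nonempty ∧
  (ClosureD σ ρ ∩ ClosureD ρ σ = ∅) ∧
  (∀ x ∈ ClosureD σ ρ, ∀ y, EqRel σ x y → y ∈ ClosureD σ ρ) ∧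
  (∀ x ∈ ClosureD ρ σ, ∀ y, EqRel ρ x y → y ∈ ClosureD ρ σ)

/-- `x_1, …, x_n` (with complementary members `p_i`, `q_i`) is a linear decomposition. -/
def IsLinDecomp (σ ρ : List A → List A → Prop) (n : ℕ) (x p q : ℕ → List A) : Prop :=
  1 ≤ n ∧
  (∀ i, 1 ≤ i → i ≤ n → x i ≠ []) ∧
  (∃ u v : ℕ → List A,
    (∀ i, 1 < i → i ≤ n → Sim σ ρ (p i ++ x i ++ q i) (q (i-1) ++ u i)) ∧
    (∀ i, 1 ≤ i → i < n → Sim σ ρ (p i ++ x i ++ q i) (v i ++ p (i+1)))) ∧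
  (∀ i, 1 ≤ i → i < n → q i = [] ∨ p (i+1) = []) ∧
  p 1 = [] ∧ q n = [] ∧ (n = 1 → x 1 ∈ DTau σ ρ)

/-- `Lin(n)`: words with a linear decomposition of at most `n` members. -/
def LinSet (σ ρ : List A → List A → Prop) (n : ℕ) : Set (List A) :=
  {w | ∃ m, 1 ≤ m ∧ m ≤ n ∧ ∃ x p q, IsLinDecomp σ ρ m x p q ∧ w = wordSeg x 1 m}

/-- `Lin = ⋃ₙ Lin(n)`: linearly decomposable words. -/
def LinAll (σ ρ : List A → List A → Prop) : Set (List A) :=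
  {w | ∃ n, w ∈ LinSet σ ρ n}

/-- Occurrence `(r, d, s)` contains occurrence `(p, e, q)` (of the same word)
iff `|r| ≤ |p|` and `|s| ≤ |q|`. -/
def Contained (p q r s : List A) : Prop := r.length ≤ p.length ∧ s.length ≤ q.length

/-- Two occurrences in `w` overlap iff some occurrence of a nonempty word is
contained in both. -/
def Overlap (w p q r s : List A) : Prop :=
  ∃ a f b : List A, f ≠ [] ∧ w = a ++ f ++ b ∧ Contained a b p q ∧ Contained a b r s

/-- `(p, e, q)` is a maximal occurrence in `w` of a word `e` in the set `L`. -/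
def MaximalOcc (L : Set (List A)) (w p e q : List A) : Prop :=
  w = p ++ e ++ q ∧ e ∈ L ∧
  ∀ r d s, w = r ++ d ++ s → d ∈ L → Contained p q r s → r = p ∧ d = e ∧ s = q

/-- Each member of a linear decomposition is a factor of a word of `D_τ`: for a single member it
lies in `D_τ` itself, and otherwise every index `i` satisfies `1 < i` or `i < m`, so one of the
two families of `Sim` conditions places `p i ++ x i ++ q i` in `D_τ`. -/
theorem IsLinDecomp.factor_of_dTau {A : Type*} {σ ρ : List A → List A → Prop} {m : ℕ}
    {x p q : ℕ → List A} (h : IsLinDecomp σ ρ m x p q) {i : ℕ} (hi : 1 ≤ i) (him : i ≤ m) :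
    ∃ d ∈ DTau σ ρ, x i <:+: d := by
  obtain ⟨-, -, ⟨u, v, hl, hr⟩, -, -, -, h1⟩ := h
  have key : ∀ y, Sim σ ρ (p i ++ x i ++ q i) y → ∃ d ∈ DTau σ ρ, x i <:+: d := fun y hy =>
    ⟨_, hy.imp And.left And.left, p i, q i, rfl⟩
  rcases hi.lt_or_eq with hi | rfl
  · exact key _ (hl i hi him)
  rcases him.lt_or_eq with him | rfl
  · exact key _ (hr 1 le_rfl him)
  · exact ⟨x 1, h1 rfl, List.infix_rfl⟩

theorem finite_infixes {A : Type*} {D : Set (List A)} (hD : D.Finite) :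
    {y | ∃ d ∈ D, y <:+: d}.Finite := by
  refine (hD.biUnion fun d _ => d.sublists.finite_toSet).subset ?_
  rintro y ⟨d, hd, hy⟩
  exact Set.mem_biUnion hd (List.mem_sublists.2 hy.sublist)

theorem finite_flatten_length_le {A : Type*} {F : Set (List A)} (hF : F.Finite) (n : ℕ) :
    {w | ∃ l : List (List A), l.length ≤ n ∧ (∀ y ∈ l, y ∈ F) ∧ w = l.flatten}.Finite := by
  have := hF.to_subtype
  refine ((List.finite_length_le F n).image fun l => (l.map Subtype.val).flatten).subset ?_
  rintro w ⟨l, hl, hlF, rfl⟩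
  lift l to List F using hlF
  exact ⟨l, by simpa using hl, rfl⟩

/-- Lemma 2.5: for every natural number `n`, the set `Lin(n)` is finite. -/
theorem linSet_finite {A : Type*} {nu nv : ℕ}
    (u : Fin nu → List A) (v : Fin nv → List A)
    (hu : Function.Injective u) (hv : Function.Injective v)
    (σ ρ : List A → List A → Prop) (hσ : σ = FamilyRel u) (hρ : ρ = FamilyRel v)
    (hset : SettingHyps σ ρ)
    (n : ℕ) : (LinSet σ ρ n).Finite := by
  have hD : (DTau σ ρ).Finite := hset.1.union hset.2.1
  refine (finite_flatten_length_le (finite_infixes hD) n).subset ?_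
  rintro w ⟨m, -, hmn, x, p, q, h, rfl⟩
  refine ⟨(List.range' 1 m).map x, by simpa using hmn, ?_, rfl⟩
  intro y hy
  obtain ⟨i, hi, rfl⟩ := List.mem_map.1 hy
  rw [List.mem_range'_1] at hi
  exact h.factor_of_dTau hi.1 (by omega)
end SqFreePaper
end

section
/- If w is square-free relative to π and w ∈ Lin(n), then the equivalence class [w]_π is finite and consists only of words in Lin(n). -/
/-!
Because `σ` and `ρ` come from families, all words of `D̄_σ` are `=_π`-equal, and the closure
hypotheses make `D̄_σ` a whole `=_π`-class; the same holds for `D̄_ρ`. A linear decomposition is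
thus a chain of members `x` with `p ++ x ++ q` in one of two classes, where the complements `q` and
`p` at a boundary can be produced from the neighbouring members by rewriting (`exists_right`,
`exists_left`). Whenever two words of one class overlap or are adjacent, rewriting one into the
other creates a square; hence the classes of consecutive members alternate (`alternate`).

Let a factor `y` of the decomposed word be rewritten into `y'` within a class `T`. If `y` lies in
one member, only that member changes. Otherwise `y` starts in `M`, leaving a prefix `a` of `M.x`,
and ends in `N`, leaving a suffix `b` of `N.x`; the members from `M` to `N` are replaced by
`a, y', b`, with `a` or `b` omitted when empty. The linking condition at the new boundaries
holds since otherwise a square would arise (`left_linkable`). The number of members could grow only if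
`M` and `N` are consecutive with `a` and `b` both nonempty, but then one of them is of class `T`,
and this forces `a = []` or `b = []` (`left_same`, `right_same`). So `Lin(n)` is preserved by
rewriting, and it is finite because members are factors of words in a finite set.
-/


namespace SqFreePaper

variable {A : Type*}

/-! ### Classes of a congruence and chains of members -/

/-- `E` is a congruence on words, and each `C t` is (empty or) a single class of `E`. -/
structure IsCongClasses (E : List A → List A → Prop) (C : Bool → List A → Prop) : Prop where
  refl : ∀ x, E x x
  symm : ∀ {x y}, E x y → E y x
  trans : ∀ {x y z}, E x y → E y z → E x z
  app : ∀ {x y} (r s : List A), E x y → E (r ++ x ++ s) (r ++ y ++ s)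
  cls : ∀ {t x y}, C t x → C t y → E x y
  cl : ∀ {t x y}, C t x → E x y → C t y

/-- A member `x` of a linear decomposition together with its complementary words `p`, `q` and
the tag `t` of the class that contains `p ++ x ++ q`. -/
structure Member (A : Type*) where
  t : Bool
  p : List A
  x : List A
  q : List A

/-- The compatibility condition between two consecutive members. -/
def Linked (C : Bool → List A → Prop) (M N : Member A) : Prop :=
  (∃ u, C N.t (M.q ++ u)) ∧ (∃ v, C M.t (v ++ N.p)) ∧ (M.q = [] ∨ N.p = [])

/-- The condition on a single member. -/
def Admissible (C : Bool → List A → Prop) (M : Member A) : Prop :=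
  M.x ≠ [] ∧ C M.t (M.p ++ M.x ++ M.q)

/-- A linear decomposition, written as a list of members. -/
structure IsDecomp (C : Bool → List A → Prop) (L : List (Member A)) : Prop where
  mem : ∀ M ∈ L, Admissible C M
  chain : L.IsChain (Linked C)
  hd : ∀ M ∈ L.head?, M.p = []
  lst : ∀ M ∈ L.getLast?, M.q = []

/-- The word decomposed by a list of members. -/
def word (L : List (Member A)) : List A := (L.map Member.x).flatten

@[simp] lemma word_nil : word ([] : List (Member A)) = [] := rfl
@[simp] lemma word_cons (M : Member A) (L) : word (M :: L) = M.x ++ word L := by simp [word]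
@[simp] lemma word_append (L K : List (Member A)) : word (L ++ K) = word L ++ word K := by
  simp [word]

/-- Every word of the `E`-class of `w` is square-free. -/
def SqFreeClass (E : List A → List A → Prop) (w : List A) : Prop :=
  ∀ z, E w z → IsSquareFreeWord z

section
variable {E : List A → List A → Prop} {C : Bool → List A → Prop}

lemma IsCongClasses.step (hE : IsCongClasses E C) {x y w z : List A} (h : E x y) (r s : List A)
    (hw : w = r ++ x ++ s) (hz : z = r ++ y ++ s) : E w z := by
  subst hw hz; exact hE.app r s h

lemma SqFreeClass.eq_nil {w z : List A} (hw : SqFreeClass E w) (h : E w z) (r c s : List A)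
    (hz : z = r ++ c ++ c ++ s) : c = [] := hw z h r c s hz

lemma IsCongClasses.app2 (hE : IsCongClasses E C) {x y x' y' : List A} (h : E x y)
    (h' : E x' y') (r : List A) : E (x ++ r ++ x') (y ++ r ++ y') :=
  hE.trans (hE.step h [] (r ++ x') (by simp) rfl) (hE.step h' (y ++ r) [] (by simp) (by simp))

/-! ### Mirror images -/

/-- The mirror image of a member. -/
def Member.rev (M : Member A) : Member A := ⟨M.t, M.q.reverse, M.x.reverse, M.p.reverse⟩

/-- The mirror image of a list of members. -/
def mirror (L : List (Member A)) : List (Member A) := (L.map Member.rev).reverse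

@[simp] lemma rev_rev (M : Member A) : M.rev.rev = M := by simp [Member.rev]

lemma word_mirror (L : List (Member A)) : word (mirror L) = (word L).reverse := by
  induction L with
  | nil => rfl
  | cons M L ih =>
    have : mirror (M :: L) = mirror L ++ [M.rev] := by simp [mirror]
    rw [this]; simp [ih, Member.rev]

lemma mirror_mirror (L : List (Member A)) : mirror (mirror L) = L := by
  simp [mirror, Function.comp_def]

/-- The mirror image of a relation on words. -/
def revE (E : List A → List A → Prop) (x y : List A) : Prop := E x.reverse y.reverse

/-- The mirror images of a family of sets of words. -/
def revC (C : Bool → List A → Prop) (t : Bool) (x : List A) : Prop := C t x.reverse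

lemma IsCongClasses.rev (hE : IsCongClasses E C) : IsCongClasses (revE E) (revC C) where
  refl _ := hE.refl _
  symm h := hE.symm h
  trans h h' := hE.trans h h'
  app r s h := hE.step h s.reverse r.reverse (by simp) (by simp)
  cls h h' := hE.cls h h'
  cl h h' := hE.cl h h'

lemma revC_revC : revC (revC C) = C := by
  funext t x; simp [revC]

lemma Linked.rev {M N : Member A} (h : Linked C M N) : Linked (revC C) N.rev M.rev := by
  obtain ⟨⟨u, hu⟩, ⟨v, hv⟩, h⟩ := h
  refine ⟨⟨v.reverse, ?_⟩, ⟨u.reverse, ?_⟩, ?_⟩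
  · simpa [revC, Member.rev] using hv
  · simpa [revC, Member.rev] using hu
  · simpa [Member.rev, or_comm] using h

lemma Admissible.rev {M : Member A} (h : Admissible C M) : Admissible (revC C) M.rev := by
  simpa [Admissible, revC, Member.rev] using h

lemma isChain_mirror {L : List (Member A)} (h : L.IsChain (Linked C)) :
    (mirror L).IsChain (Linked (revC C)) := by
  rw [mirror, List.isChain_reverse, List.isChain_map]
  exact h.imp fun M N hMN => hMN.rev

lemma admissible_mirror {L : List (Member A)} (h : ∀ M ∈ L, Admissible C M) :
    ∀ M ∈ mirror L, Admissible (revC C) M := by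
  intro M hM
  simp only [mirror, List.mem_reverse, List.mem_map] at hM
  obtain ⟨N, hN, rfl⟩ := hM
  exact (h N hN).rev

lemma IsDecomp.rev {L : List (Member A)} (h : IsDecomp C L) : IsDecomp (revC C) (mirror L) where
  mem := admissible_mirror h.mem
  chain := isChain_mirror h.chain
  hd M hM := by
    simp only [mirror, List.head?_reverse, List.getLast?_map, Option.mem_def,
      Option.map_eq_some_iff] at hM
    obtain ⟨N, hN, rfl⟩ := hM
    simp [Member.rev, h.lst N hN]
  lst M hM := by
    simp only [mirror, List.getLast?_reverse, List.head?_map, Option.mem_def,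
      Option.map_eq_some_iff] at hM
    obtain ⟨N, hN, rfl⟩ := hM
    simp [Member.rev, h.hd N hN]

lemma SqFreeClass.rev {w : List A} (h : SqFreeClass E w) : SqFreeClass (revE E) w.reverse := by
  intro z hz r c s hzr
  have hz' : E w z.reverse := by simpa [revE] using hz
  simpa using h.eq_nil hz' s.reverse c.reverse r.reverse (by simp [hzr])

/-! ### Consequences of square-freeness -/

/-- The complement `M.q` can be produced, up to `E`, by the members to the right of `M`. -/
lemma exists_right (hE : IsCongClasses E C) (L2 : List (Member A)) :
    ∀ (L1 : List (Member A)) (M : Member A), IsDecomp C (L1 ++ M :: L2) →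
      ∃ U, E (word L2) (M.q ++ U) := by
  induction L2 with
  | nil =>
    intro L1 M h
    have := h.lst M (by simp)
    exact ⟨[], by simpa [this] using hE.refl []⟩
  | cons N L2 ih =>
    intro L1 M h
    obtain ⟨U, hU⟩ := ih (L1 ++ [M]) N (by simpa using h)
    have hl : Linked C M N := by
      have := h.chain
      simp only [List.isChain_append, List.isChain_cons_cons] at this
      exact this.2.1.1
    obtain ⟨⟨u, hu⟩, -, hq | hp⟩ := hl
    · exact ⟨word (N :: L2), by simpa [hq] using hE.refl _⟩
    · have hN := (h.mem N (by simp)).2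
      refine ⟨u ++ U, hE.trans (y := N.x ++ N.q ++ U) ?_ ?_⟩
      · exact hE.step hU N.x [] (by simp) (by simp)
      · exact hE.step (hE.cls hN hu) [] U (by simp [hp]) (by simp)

lemma exists_left (hE : IsCongClasses E C) (L1 L2 : List (Member A)) (M : Member A)
    (h : IsDecomp C (L1 ++ M :: L2)) : ∃ V, E (word L1) (V ++ M.p) := by
  have h' := h.rev
  obtain ⟨U, hU⟩ := exists_right hE.rev (mirror L1) (mirror L2) M.rev
    (by simpa [mirror] using h')
  exact ⟨U.reverse, by simpa [revE, word_mirror, Member.rev] using hU⟩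

lemma linked_of_decomp {L1 L2 : List (Member A)} {M N : Member A}
    (h : IsDecomp C (L1 ++ M :: N :: L2)) : Linked C M N := by
  have := h.chain
  simp only [List.isChain_append, List.isChain_cons_cons] at this
  exact this.2.1.1

/-- Consecutive members lie in different classes: otherwise the class of the word would contain a
word with two overlapping or adjacent factors of the same class, which can be rewritten into a
square. -/
lemma alternate (hE : IsCongClasses E C) {L1 L2 : List (Member A)} {M N : Member A}
    (h : IsDecomp C (L1 ++ M :: N :: L2)) (hsf : SqFreeClass E (word (L1 ++ M :: N :: L2))) :
    M.t ≠ N.t := by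
  intro ht
  obtain ⟨V, hV⟩ := exists_left hE _ _ _ h
  obtain ⟨U, hU⟩ := exists_right hE L2 (L1 ++ [M]) N (by simpa using h)
  have h1 : E (word (L1 ++ M :: N :: L2)) (V ++ (M.p ++ M.x ++ N.x ++ N.q) ++ U) := by
    simpa using hE.app2 hV hU (M.x ++ N.x)
  obtain ⟨hMx, hM⟩ := h.mem M (by simp)
  obtain ⟨hNx, hN⟩ := h.mem N (by simp)
  obtain ⟨⟨u, hu⟩, ⟨v, hv⟩, hq | hp⟩ := linked_of_decomp h
  · have h2 : E (M.p ++ M.x) (v ++ N.p) := by simpa [hq] using hE.cls hM hv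
    have h3 : E (v ++ N.p) (N.p ++ N.x ++ N.q) := hE.cls hv (ht ▸ hN)
    have h4 := hE.trans h1 (hE.step (hE.trans h2 h3) V (N.x ++ N.q ++ U) (by simp) rfl)
    have := hsf.eq_nil h4 (V ++ N.p) (N.x ++ N.q) U (by simp)
    simp_all
  · have h2 : E (N.x ++ N.q) (M.p ++ M.x ++ M.q) := by
      have hM' : C N.t (M.p ++ M.x ++ M.q) := ht ▸ hM
      simpa [hp] using hE.cls hN hM'
    have h4 := hE.trans h1 (hE.step h2 (V ++ M.p ++ M.x) U (by simp) rfl)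
    have := hsf.eq_nil h4 V (M.p ++ M.x) (M.q ++ U) (by simp)
    simp_all

/-- Suppose a factor `a' ++ β` of class `T` starts inside the member `M` (leaving the prefix `a` of
`M.x`) and extends beyond it. If `M` is of class `T` too, then nothing of `M` remains and
`M.p` is empty. -/
lemma left_same (hE : IsCongClasses E C) {L1 L2 : List (Member A)} {M : Member A}
    (h : IsDecomp C (L1 ++ M :: L2)) (hsf : SqFreeClass E (word (L1 ++ M :: L2)))
    {a a' β s : List A} (hx : M.x = a ++ a') (hw : word L2 = β ++ s)
    (hT : C M.t (a' ++ β)) : M.p ++ a = [] := by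
  obtain ⟨V, hV⟩ := exists_left hE _ _ _ h
  have h1 : E (word (L1 ++ M :: L2)) (V ++ M.p ++ a ++ (a' ++ β) ++ s) :=
    hE.step hV [] (a ++ a' ++ β ++ s) (by simp [hx, hw]) (by simp)
  have h2 := hE.trans h1 (hE.step (hE.cls hT (h.mem M (by simp)).2) _ s rfl rfl)
  exact hsf.eq_nil h2 V (M.p ++ a) (a' ++ M.q ++ s) (by simp [hx])

/-- In the same situation, `a' ++ M.q` is a prefix of a word of class `T`. -/
lemma left_linkable (hE : IsCongClasses E C) {L1 L2 : List (Member A)} {M N : Member A}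
    (h : IsDecomp C (L1 ++ M :: N :: L2)) (hsf : SqFreeClass E (word (L1 ++ M :: N :: L2)))
    {T : Bool} {a a' β s : List A} (hx : M.x = a ++ a') (ha' : a' ≠ [])
    (hw : word (N :: L2) = β ++ s) (hT : C T (a' ++ β)) : ∃ U, C T (a' ++ M.q ++ U) := by
  by_cases ht : M.t = T
  · subst ht
    have hpa := left_same hE h hsf hx hw hT
    have hM := (h.mem M (by simp)).2
    simp only [List.append_eq_nil_iff] at hpa
    exact ⟨[], by simpa [hx, hpa.1, hpa.2] using hM⟩
  obtain ⟨-, -, hq | hp⟩ := linked_of_decomp h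
  · exact ⟨β, by simpa [hq] using hT⟩
  -- Now `N` is of class `T`, with `N.x ++ N.q` available right after `a'`; rewriting it into
  -- `a' ++ β` produces the square of `a'`.
  exfalso
  have hNt : N.t = T := by
    have := alternate hE h hsf
    revert ht this
    cases M.t <;> cases N.t <;> cases T <;> simp
  obtain ⟨U, hU⟩ := exists_right hE L2 (L1 ++ [M]) N (by simpa using h)
  have hN : C T (N.x ++ N.q) := by simpa [hp, hNt] using (h.mem N (by simp)).2
  have h1 : E (word (L1 ++ M :: N :: L2)) (word L1 ++ M.x ++ (N.x ++ N.q) ++ U) :=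
    hE.step hU (word L1 ++ M.x ++ N.x) [] (by simp) (by simp)
  have h2 := hE.trans h1 (hE.step (hE.cls hN hT) _ U rfl rfl)
  exact ha' (hsf.eq_nil h2 (word L1 ++ a) a' (β ++ U) (by simp [hx]))

/-- The part of a decomposition to the left of a rewritten factor of class `T` can be trimmed so
as to link with the new member `v`. -/
lemma left_main (hE : IsCongClasses E C) {L1 L2 : List (Member A)} {M N : Member A}
    (h : IsDecomp C (L1 ++ M :: N :: L2)) (hsf : SqFreeClass E (word (L1 ++ M :: N :: L2)))
    {T : Bool} {a a' β s : List A} (hx : M.x = a ++ a') (ha' : a' ≠ [])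
    (hw : word (N :: L2) = β ++ s) (hT : C T (a' ++ β)) :
    ∃ K : List (Member A), (∀ P ∈ K, Admissible C P) ∧ K.length ≤ L1.length + 1 ∧
      (a = [] → K.length ≤ L1.length) ∧ word K = word L1 ++ a ∧ (∀ P ∈ K.head?, P.p = []) ∧
      ∀ v, (K ++ [(⟨T, [], v, []⟩ : Member A)]).IsChain (Linked C) := by
  obtain ⟨U, hU⟩ := left_linkable hE h hsf hx ha' hw hT
  have hM := h.mem M (by simp)
  have hch := h.chain
  rw [List.isChain_append] at hch
  obtain ⟨hch1, -, hch3⟩ := hch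
  by_cases ha : a = []
  · refine ⟨L1, fun P hP => h.mem P (by simp [hP]), by simp, fun _ => le_rfl, by simp [ha],
      fun P hP => h.hd P ?_, fun v => ?_⟩
    · rw [List.head?_append]; simp only [Option.mem_def] at hP; simp [hP]
    · rw [List.isChain_append]
      refine ⟨hch1, by simp, ?_⟩
      intro P hP Q hQ
      simp only [List.head?_cons, Option.mem_def, Option.some.injEq] at hQ
      subst hQ
      obtain ⟨⟨u, hu⟩, -, hlk⟩ := hch3 P hP M (by simp)
      have hPm := h.mem P (List.mem_append_left _ (List.mem_of_getLast? hP))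
      refine ⟨?_, ⟨P.p ++ P.x ++ P.q, by simpa using hPm.2⟩, Or.inr rfl⟩
      rcases hlk with hq | hp
      · exact ⟨a' ++ β, by simpa [hq] using hT⟩
      · -- The whole word `a' ++ M.q` of the class of `M` starts a word of class `T`.
        have hM2 : C M.t (a' ++ M.q) := by simpa [hp, hx, ha] using hM.2
        exact ⟨u ++ U, hE.cl hU (hE.step (hE.cls hM2 hu) [] U (by simp) (by simp))⟩
  · refine ⟨L1 ++ [⟨M.t, M.p, a, a' ++ M.q⟩], ?_, by simp, fun h' => absurd h' ha, by simp,
      ?_, fun v => ?_⟩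
    · intro P hP
      simp only [List.mem_append, List.mem_singleton] at hP
      rcases hP with hP | rfl
      · exact h.mem P (by simp [hP])
      · exact ⟨ha, by simpa [hx] using hM.2⟩
    · intro P hP
      have hh := h.hd
      cases L1 with
      | nil =>
        simp only [List.nil_append, List.head?_cons, Option.mem_def, Option.some.injEq] at hP
        subst hP
        exact hh M (by simp)
      | cons P' L1 => exact hh P (by simpa using hP)
    · rw [List.append_assoc, List.isChain_append]
      refine ⟨hch1, ?_, ?_⟩
      · simp only [List.singleton_append, List.isChain_cons_cons, List.isChain_singleton,
          and_true]
        exact ⟨⟨U, by simpa using hU⟩, ⟨M.p ++ M.x ++ M.q, by simpa [hx] using hM.2⟩, Or.inr rfl⟩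
      · intro P hP Q hQ
        simp only [List.singleton_append, List.head?_cons, Option.mem_def,
          Option.some.injEq] at hQ
        subst hQ
        exact hch3 P hP M (by simp)

lemma right_same (hE : IsCongClasses E C) {L1 L2 : List (Member A)} {M : Member A}
    (h : IsDecomp C (L2 ++ M :: L1)) (hsf : SqFreeClass E (word (L2 ++ M :: L1)))
    {b b' α r : List A} (hx : M.x = b' ++ b) (hw : word L2 = r ++ α)
    (hT : C M.t (α ++ b')) : b = [] := by
  have h' : IsDecomp (revC C) (mirror L1 ++ M.rev :: mirror L2) := by
    simpa [mirror] using h.rev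
  have hw' : word (mirror L1 ++ M.rev :: mirror L2) = (word (L2 ++ M :: L1)).reverse := by
    rw [← word_mirror]; simp [mirror]
  have := left_same hE.rev h' (hw' ▸ hsf.rev) (a := b.reverse) (a' := b'.reverse)
    (β := α.reverse) (s := r.reverse) (by simp [Member.rev, hx]) (by simp [word_mirror, hw])
    (by simpa [revC, Member.rev] using hT)
  simp_all

/-- The mirror image of `left_main`. -/
lemma right_main (hE : IsCongClasses E C) {L1 L2 : List (Member A)} {M N : Member A}
    (h : IsDecomp C (L2 ++ N :: M :: L1)) (hsf : SqFreeClass E (word (L2 ++ N :: M :: L1)))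
    {T : Bool} {b b' α r : List A} (hx : M.x = b' ++ b) (hb' : b' ≠ [])
    (hw : word (L2 ++ [N]) = r ++ α) (hT : C T (α ++ b')) :
    ∃ K : List (Member A), (∀ P ∈ K, Admissible C P) ∧ K.length ≤ L1.length + 1 ∧
      (b = [] → K.length ≤ L1.length) ∧ word K = b ++ word L1 ∧ (∀ P ∈ K.getLast?, P.q = []) ∧
      ∀ v, ((⟨T, [], v, []⟩ : Member A) :: K).IsChain (Linked C) := by
  have h' : IsDecomp (revC C) (mirror L1 ++ M.rev :: N.rev :: mirror L2) := by
    simpa [mirror] using h.rev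
  have hw' : word (mirror L1 ++ M.rev :: N.rev :: mirror L2) =
      (word (L2 ++ N :: M :: L1)).reverse := by
    rw [← word_mirror]; simp [mirror]
  have hw2 : word (N.rev :: mirror L2) = α.reverse ++ r.reverse := by
    have : N.rev :: mirror L2 = mirror (L2 ++ [N]) := by simp [mirror]
    rw [this, word_mirror, hw]; simp
  obtain ⟨K, hK1, hK2, hK3, hK4, hK5, hK6⟩ := left_main hE.rev h' (hw' ▸ hsf.rev)
    (T := T) (a := b.reverse) (a' := b'.reverse) (β := α.reverse) (s := r.reverse)
    (by simp [Member.rev, hx]) (by simpa using hb') hw2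
    (by simpa [revC] using hT)
  have hl : ∀ J : List (Member A), (mirror J).length = J.length := by simp [mirror]
  refine ⟨mirror K, ?_, ?_, ?_, ?_, ?_, fun v => ?_⟩
  · simpa [revC_revC] using admissible_mirror hK1
  · simpa [hl] using hK2
  · intro hb; simpa [hl, hb] using hK3
  · rw [word_mirror, hK4, word_mirror]; simp
  · intro P hP
    simp only [mirror, List.getLast?_reverse, List.head?_map, Option.mem_def,
      Option.map_eq_some_iff] at hP
    obtain ⟨Q, hQ, rfl⟩ := hP
    simp [Member.rev, hK5 Q hQ]
  · have := isChain_mirror (hK6 v.reverse)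
    rw [revC_revC] at this
    simpa [mirror, Member.rev] using this

/-! ### Rewriting a factor -/

lemma locate_start (L : List (Member A)) : ∀ (r t : List A), word L = r ++ t → t ≠ [] →
    ∃ L1 M L2 a a', L = L1 ++ M :: L2 ∧ M.x = a ++ a' ∧ a' ≠ [] ∧ r = word L1 ++ a ∧
      t = a' ++ word L2 := by
  induction L with
  | nil => intro r t h ht; simp_all
  | cons M L ih =>
    intro r t h ht
    rw [word_cons, List.append_eq_append_iff] at h
    rcases h with ⟨e, rfl, he⟩ | ⟨e, hM, rfl⟩
    · obtain ⟨L1, P, L2, a, a', rfl, h1, h2, h3, h4⟩ := ih e t he ht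
      exact ⟨M :: L1, P, L2, a, a', rfl, h1, h2, by simp [h3], h4⟩
    · by_cases he : e = []
      · subst he
        obtain ⟨L1, P, L2, a, a', rfl, h1, h2, h3, h4⟩ := ih [] (word L) (by simp) ht
        exact ⟨M :: L1, P, L2, a, a', rfl, h1, h2, by
          rw [List.append_nil] at hM
          rw [word_cons, List.append_assoc, ← h3, List.append_nil, hM], h4⟩
      · exact ⟨[], M, L, r, e, rfl, hM, he, by simp, rfl⟩

lemma locate_end (L : List (Member A)) : ∀ (β s : List A), word L = β ++ s → β ≠ [] →
    ∃ L1 M L2 b' b, L = L1 ++ M :: L2 ∧ M.x = b' ++ b ∧ b' ≠ [] ∧ β = word L1 ++ b' ∧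
      s = b ++ word L2 := by
  intro β s h hβ
  obtain ⟨L1, M, L2, a, a', h1, h2, h3, h4, h5⟩ := locate_start (mirror L) s.reverse β.reverse
    (by rw [word_mirror, h]; simp) (by simpa using hβ)
  refine ⟨mirror L2, M.rev, mirror L1, a'.reverse, a.reverse, ?_, ?_, ?_, ?_, ?_⟩
  · rw [← mirror_mirror L, h1]; simp [mirror]
  · simp [Member.rev, h2]
  · simpa using h3
  · rw [word_mirror, ← List.reverse_append, ← h5, List.reverse_reverse]
  · rw [word_mirror, ← List.reverse_append, ← h4, List.reverse_reverse]

/-- A factor inside a single member is rewritten within that member. -/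
lemma rewrite_inside (hE : IsCongClasses E C) {L1 L2 : List (Member A)} {M : Member A}
    (h : IsDecomp C (L1 ++ M :: L2)) {y : List A} (hy : y ≠ []) (hxy : E M.x y) :
    IsDecomp C (L1 ++ ⟨M.t, M.p, y, M.q⟩ :: L2) where
  mem P hP := by
    simp only [List.mem_append, List.mem_cons] at hP
    rcases hP with hP | rfl | hP
    · exact h.mem P (by simp [hP])
    · exact ⟨hy, hE.cl (h.mem M (by simp)).2 (hE.app _ _ hxy)⟩
    · exact h.mem P (by simp [hP])
  chain := by
    have := h.chain
    rw [List.isChain_append, List.isChain_cons] at this ⊢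
    obtain ⟨h1, ⟨h2, h3⟩, h4⟩ := this
    refine ⟨h1, ⟨fun P hP => h2 P hP, h3⟩, fun P hP Q hQ => ?_⟩
    simp only [List.head?_cons, Option.mem_def, Option.some.injEq] at hQ
    subst hQ
    exact h4 P hP M (by simp)
  hd P hP := by
    have hh := h.hd
    cases L1 with
    | nil =>
      simp only [List.nil_append, List.head?_cons, Option.mem_def, Option.some.injEq] at hP
      subst hP
      exact hh M (by simp)
    | cons P' L1 => exact hh P (by simpa using hP)
  lst P hP := by
    have hh := h.lst
    cases L2 with
    | nil =>
      simp only [List.getLast?_append, List.getLast?_singleton, Option.some_or, Option.mem_def,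
        Option.some.injEq] at hP
      subst hP
      exact hh M (by simp)
    | cons P' L2 => exact hh P (by simpa using hP)

/-- Rewriting a factor within its class does not increase the order of decomposability. -/
lemma rewrite_factor (hE : IsCongClasses E C) {L : List (Member A)} (h : IsDecomp C L)
    (hsf : SqFreeClass E (word L)) {T : Bool} {r y y' s : List A} (hw : word L = r ++ y ++ s)
    (hy : y ≠ []) (hy' : y' ≠ []) (hT : C T y) (hT' : C T y') :
    ∃ K, K ≠ [] ∧ K.length ≤ L.length ∧ IsDecomp C K ∧ word K = r ++ y' ++ s := by
  obtain ⟨L1, M, L2, a, a', rfl, hx, ha', hr, ht⟩ := locate_start L r (y ++ s) (by simp [hw])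
    (by simp [hy])
  rw [List.append_eq_append_iff] at ht
  by_cases hin : ∃ e, a' = y ++ e ∧ s = e ++ word L2
  · obtain ⟨e, he, hs⟩ := hin
    refine ⟨L1 ++ ⟨M.t, M.p, a ++ y' ++ e, M.q⟩ :: L2, by simp, by simp,
      rewrite_inside hE h (by simp [hy']) ?_, by simp [hr, hs]⟩
    exact hE.step (hE.cls hT hT') a e (by simp [hx, he]) rfl
  obtain ⟨β, hyβ, hL2⟩ : ∃ β, y = a' ++ β ∧ word L2 = β ++ s := by
    rcases ht with ⟨e, h1, h2⟩ | ⟨e, h1, h2⟩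
    · exact absurd ⟨e, h1, h2⟩ hin
    · exact ⟨e, h1, h2⟩
  have hβ : β ≠ [] := by
    rintro rfl
    exact hin ⟨[], by simp [hyβ], by simp [hL2]⟩
  obtain ⟨Mid, N, L3, b', b, rfl, hNx, hb', hβ', hs⟩ := locate_end L2 β s hL2 hβ
  have hleft : ∃ K : List (Member A), (∀ P ∈ K, Admissible C P) ∧ K.length ≤ L1.length + 1 ∧
      (a = [] → K.length ≤ L1.length) ∧ word K = word L1 ++ a ∧ (∀ P ∈ K.head?, P.p = []) ∧
      ∀ v, (K ++ [(⟨T, [], v, []⟩ : Member A)]).IsChain (Linked C) := by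
    cases Mid with
    | nil => exact left_main hE h hsf hx ha' hL2 (hyβ ▸ hT)
    | cons Q Mid => exact left_main hE h hsf hx ha' hL2 (hyβ ▸ hT)
  obtain ⟨K, hK1, hK2, hK3, hK4, hK5, hK6⟩ := hleft
  have hTr : C T ((a' ++ word Mid) ++ b') := by simpa [hyβ, hβ'] using hT
  have hwr : word (L1 ++ M :: Mid) = (word L1 ++ a) ++ (a' ++ word Mid) := by simp [hx]
  have hright : ∃ K : List (Member A), (∀ P ∈ K, Admissible C P) ∧ K.length ≤ L3.length + 1 ∧
      (b = [] → K.length ≤ L3.length) ∧ word K = b ++ word L3 ∧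
      (∀ P ∈ K.getLast?, P.q = []) ∧
      ∀ v, ((⟨T, [], v, []⟩ : Member A) :: K).IsChain (Linked C) := by
    obtain ⟨J, Q, hJ⟩ : ∃ J Q, L1 ++ M :: Mid = J ++ [Q] :=
      ⟨_, _, (List.dropLast_concat_getLast (l := L1 ++ M :: Mid) (by simp)).symm⟩
    have hJ' : L1 ++ M :: (Mid ++ N :: L3) = J ++ Q :: N :: L3 := by
      have := congrArg (· ++ N :: L3) hJ
      simpa using this
    exact right_main hE (hJ' ▸ h) (hJ' ▸ hsf) hNx hb' (hJ ▸ hwr) hTr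
  obtain ⟨K', hK1', hK2', hK3', hK4', hK5', hK6'⟩ := hright
  refine ⟨K ++ ⟨T, [], y', []⟩ :: K', by simp, ?_, ⟨?_, ?_, ?_, ?_⟩, ?_⟩
  · -- Three new members replace two only when the factor meets exactly `M` and `N`; one of
    -- these is then of class `T`, so `a` or `b` is empty.
    have hab : Mid = [] → a = [] ∨ b = [] := by
      rintro rfl
      have halt := alternate hE h hsf
      by_cases hMt : M.t = T
      · subst hMt
        have := left_same hE h hsf hx hL2 (hyβ ▸ hT)
        simp_all
      · have hNt : N.t = T := by
          revert halt hMt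
          cases M.t <;> cases N.t <;> cases T <;> simp
        subst hNt
        have e : L1 ++ M :: ([] ++ N :: L3) = (L1 ++ [M]) ++ N :: L3 := by simp
        exact Or.inr (right_same hE (e ▸ h) (e ▸ hsf) hNx hwr hTr)
    cases Mid with
    | nil =>
      rcases hab rfl with ha | hb
      · have := hK3 ha
        simp; omega
      · have := hK3' hb
        simp; omega
    | cons Q Mid => simp; omega
  · intro P hP
    simp only [List.mem_append, List.mem_cons] at hP
    rcases hP with hP | rfl | hP
    · exact hK1 P hP
    · exact ⟨hy', by simpa using hT'⟩
    · exact hK1' P hP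
  · have h1 := hK6 y'
    have h2 := hK6' y'
    rw [List.isChain_append] at h1 ⊢
    exact ⟨h1.1, h2, fun P hP Q hQ => h1.2.2 P hP Q (by simpa using hQ)⟩
  · intro P hP
    cases K with
    | nil => simp at hP; simp [← hP]
    | cons Q K => exact hK5 P (by simpa using hP)
  · intro P hP
    cases K' with
    | nil => simp at hP; simp [← hP]
    | cons Q K => exact hK5' P (by simpa using hP)
  · simp [hK4, hK4', hr, hs]

end

/-! ### The classes `D̄_σ` and `D̄_ρ` -/

/-- The two closures, indexed by a tag. -/
def classOf (σ ρ : List A → List A → Prop) : Bool → List A → Prop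
  | true => fun x => x ∈ ClosureD σ ρ
  | false => fun x => x ∈ ClosureD ρ σ

lemma OneStep.symm {π : List A → List A → Prop} {x y : List A} (h : OneStep π x y) :
    OneStep π y x := by
  obtain ⟨r, s, u, v, h1, h2, h3⟩ := h
  exact ⟨r, s, v, u, h2, h1, h3.symm⟩

lemma EqRel.symm {π : List A → List A → Prop} {x y : List A} (h : EqRel π x y) :
    EqRel π y x := by
  induction h with
  | refl => exact .refl
  | tail _ h ih => exact .head h.symm ih

lemma EqRel.app {π : List A → List A → Prop} {x y : List A} (r s : List A)
    (h : EqRel π x y) : EqRel π (r ++ x ++ s) (r ++ y ++ s) := by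
  induction h with
  | refl => exact .refl
  | tail _ h ih =>
    obtain ⟨r', s', u, v, rfl, rfl, h3⟩ := h
    exact ih.tail ⟨r ++ r', s' ++ s, u, v, by simp, by simp, h3⟩

lemma EqRel.mono {π π' : List A → List A → Prop} (hπ : ∀ x y, π x y → π' x y) {x y : List A}
    (h : EqRel π x y) : EqRel π' x y := by
  induction h with
  | refl => exact .refl
  | tail _ h ih =>
    obtain ⟨r, s, u, v, h1, h2, h3⟩ := h
    exact ih.tail ⟨r, s, u, v, h1, h2, h3.imp (hπ _ _) (hπ _ _)⟩

lemma EqRel.of_rel {π : List A → List A → Prop} {x y : List A} (h : π x y ∨ π y x) :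
    EqRel π x y := Relation.ReflTransGen.single ⟨[], [], x, y, by simp, by simp, h⟩

/-- A family rewrites each of its words into each other one, so the closure is one class. -/
lemma closureD_eqRel {k : ℕ} {u : Fin k → List A} {ρ π : List A → List A → Prop}
    (h1 : ∀ x y, FamilyRel u x y → π x y) (h2 : ∀ x y, ρ x y → π x y) {x y : List A}
    (hx : x ∈ ClosureD (FamilyRel u) ρ) (hy : y ∈ ClosureD (FamilyRel u) ρ) :
    EqRel π x y := by
  have hD : ∀ d ∈ DWords (FamilyRel u), ∃ i, d = u i := by
    rintro d ⟨e, ⟨i, j, -, h, -⟩ | ⟨i, j, -, -, h⟩⟩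
    exacts [⟨i, h⟩, ⟨j, h⟩]
  obtain ⟨d, hd, hdx⟩ := hx
  obtain ⟨e, he, hey⟩ := hy
  obtain ⟨i, rfl⟩ := hD d hd
  obtain ⟨j, rfl⟩ := hD e he
  have hde : EqRel π (u i) (u j) := by
    rcases lt_trichotomy i j with h | h | h
    · exact EqRel.of_rel (Or.inl (h1 _ _ ⟨i, j, h, rfl, rfl⟩))
    · subst h; exact Relation.ReflTransGen.refl
    · exact EqRel.of_rel (Or.inr (h1 _ _ ⟨j, i, h, rfl, rfl⟩))
  exact ((hdx.mono h2).symm.trans hde).trans (hey.mono h2)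

lemma closureD_closed {σ ρ π : List A → List A → Prop}
    (hπ : ∀ x y, π x y → σ x y ∨ ρ x y)
    (hσ : ∀ x ∈ ClosureD σ ρ, ∀ y, EqRel σ x y → y ∈ ClosureD σ ρ) {x y : List A}
    (hx : x ∈ ClosureD σ ρ) (h : EqRel π x y) : y ∈ ClosureD σ ρ := by
  induction h with
  | refl => exact hx
  | tail _ hst ih =>
    obtain ⟨r, s, a, b, h1, h2, h3⟩ := hst
    have : (σ a b ∨ σ b a) ∨ (ρ a b ∨ ρ b a) := by
      rcases h3 with h3 | h3 <;> rcases hπ _ _ h3 with h | h <;> tauto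
    rcases this with h | h
    · exact hσ _ ih _ (Relation.ReflTransGen.single ⟨r, s, a, b, h1, h2, h⟩)
    · obtain ⟨d, hd, hdx⟩ := ih
      exact ⟨d, hd, hdx.tail ⟨r, s, a, b, h1, h2, h⟩⟩

lemma isCongClasses {nu nv : ℕ} (u : Fin nu → List A) (v : Fin nv → List A)
    (hset : SettingHyps (FamilyRel u) (FamilyRel v)) :
    IsCongClasses (EqRel (PiRel (FamilyRel u) (FamilyRel v)))
      (classOf (FamilyRel u) (FamilyRel v)) where
  refl _ := Relation.ReflTransGen.refl
  symm h := EqRel.symm h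
  trans h h' := Relation.ReflTransGen.trans h h'
  app r s h := EqRel.app r s h
  cls {t x y} hx hy := by
    cases t
    · exact closureD_eqRel (fun _ _ => Or.inr) (fun _ _ => Or.inl) hx hy
    · exact closureD_eqRel (fun _ _ => Or.inl) (fun _ _ => Or.inr) hx hy
  cl {t x y} hx hy := by
    obtain ⟨-, -, -, -, -, h1, h2⟩ := hset
    cases t
    · exact closureD_closed (fun _ _ h => Or.symm h) h2 hx hy
    · exact closureD_closed (fun _ _ h => h) h1 hx hy

lemma sim_iff {σ ρ : List A → List A → Prop} {x y : List A} :
    Sim σ ρ x y ↔ ∃ t, classOf σ ρ t x ∧ classOf σ ρ t y := by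
  simp [Sim, classOf, or_comm]

lemma mem_DTau_iff {σ ρ : List A → List A → Prop} {x : List A} :
    x ∈ DTau σ ρ ↔ ∃ t, classOf σ ρ t x := by
  simp [DTau, classOf, or_comm]

/-! ### Translation between the two forms of a linear decomposition -/

lemma exists_decomp {E σ ρ : List A → List A → Prop} (hE : IsCongClasses E (classOf σ ρ))
    {n : ℕ} {w : List A} (hw : w ∈ LinSet σ ρ n) :
    ∃ L, L.length ≤ n ∧ IsDecomp (classOf σ ρ) L ∧ w = word L := by
  obtain ⟨m, -, hmn, x, p, q, ⟨hm, hx, ⟨u, v, hu, hv⟩, hpq, hp, hq, h1⟩, rfl⟩ := hw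
  have hex : ∀ i, ∃ t, 1 ≤ i → i ≤ m → classOf σ ρ t (p i ++ x i ++ q i) := by
    intro i
    by_cases hi : 1 ≤ i ∧ i ≤ m
    · rcases Nat.lt_or_ge 1 i with h | h
      · obtain ⟨t, ht, -⟩ := sim_iff.1 (hu i h hi.2)
        exact ⟨t, fun _ _ => ht⟩
      rcases Nat.lt_or_ge i m with h' | h'
      · obtain ⟨t, ht, -⟩ := sim_iff.1 (hv i hi.1 h')
        exact ⟨t, fun _ _ => ht⟩
      · obtain rfl : i = 1 := by omega
        obtain rfl : m = 1 := by omega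
        obtain ⟨t, ht⟩ := mem_DTau_iff.1 (h1 rfl)
        exact ⟨t, fun _ _ => by simpa [hp, hq] using ht⟩
    · exact ⟨true, fun h h' => absurd ⟨h, h'⟩ hi⟩
  choose t ht using hex
  have hsim : ∀ {i z}, 1 ≤ i → i ≤ m → Sim σ ρ (p i ++ x i ++ q i) z → classOf σ ρ (t i) z := by
    intro i z hi hi' hs
    obtain ⟨t', h2, h3⟩ := sim_iff.1 hs
    exact hE.cl (ht i hi hi') (hE.cls h2 h3)
  refine ⟨(List.range' 1 m).map fun i => ⟨t i, p i, x i, q i⟩, by simpa using hmn,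
    ⟨?_, ?_, ?_, ?_⟩, by simp [word, wordSeg, Function.comp_def]⟩
  · intro M hM
    simp only [List.mem_map, List.mem_range'_1] at hM
    obtain ⟨i, ⟨hi, hi'⟩, rfl⟩ := hM
    exact ⟨hx i hi (by omega), ht i hi (by omega)⟩
  · rw [List.isChain_iff_getElem]
    intro i hi
    simp only [List.length_map, List.length_range'] at hi
    simp only [List.getElem_map, List.getElem_range', one_mul]
    refine ⟨⟨u (1 + (i + 1)), ?_⟩, ⟨v (1 + i), ?_⟩, ?_⟩
    · have := hsim (by omega) (by omega) (hu (1 + (i + 1)) (by omega) (by omega))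
      simpa [show 1 + (i + 1) - 1 = 1 + i by omega] using this
    · have := hsim (by omega) (by omega) (hv (1 + i) (by omega) (by omega))
      simpa [add_assoc] using this
    · simpa [add_assoc] using hpq (1 + i) (by omega) (by omega)
  · intro M hM
    obtain ⟨k, rfl⟩ : ∃ k, m = k + 1 := ⟨m - 1, by omega⟩
    simp [List.range'_succ] at hM
    simpa [← hM] using hp
  · intro M hM
    obtain ⟨k, rfl⟩ : ∃ k, m = k + 1 := ⟨m - 1, by omega⟩
    simp [List.range'_concat] at hM
    simpa [← hM, add_comm] using hq

lemma mem_LinSet_of_decomp {σ ρ : List A → List A → Prop} {n : ℕ} {L : List (Member A)}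
    (hL0 : L ≠ []) (hLn : L.length ≤ n) (hL : IsDecomp (classOf σ ρ) L) :
    word L ∈ LinSet σ ρ n := by
  have hpos : 1 ≤ L.length := List.length_pos_iff.2 hL0
  set f : ℕ → Member A := fun i => L.getD (i - 1) ⟨true, [], [], []⟩ with hf
  have hfi : ∀ i, 1 ≤ i → (h : i ≤ L.length) → f i = L[i - 1]'(by omega) := by
    intro i hi h
    simp only [hf]
    rw [List.getD_eq_getElem]
  have hmem : ∀ i, 1 ≤ i → i ≤ L.length → Admissible (classOf σ ρ) (f i) := by
    intro i hi h
    rw [hfi i hi h]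
    exact hL.mem _ (List.getElem_mem _)
  have hlink : ∀ i, 1 ≤ i → i < L.length → Linked (classOf σ ρ) (f i) (f (i + 1)) := by
    intro i hi h
    rw [hfi i hi h.le, hfi (i + 1) (by omega) h]
    have := (List.isChain_iff_getElem.1 hL.chain) (i - 1) (by omega)
    simpa [show i - 1 + 1 = i by omega] using this
  have hu : ∀ i, ∃ u, 1 < i → i ≤ L.length →
      Sim σ ρ ((f i).p ++ (f i).x ++ (f i).q) ((f (i - 1)).q ++ u) := by
    intro i
    by_cases hi : 1 < i ∧ i ≤ L.length
    · obtain ⟨⟨u, hu⟩, -, -⟩ := hlink (i - 1) (by omega) (by omega)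
      rw [show i - 1 + 1 = i by omega] at hu
      exact ⟨u, fun _ _ => sim_iff.2 ⟨_, (hmem i (by omega) hi.2).2, hu⟩⟩
    · exact ⟨[], fun h h' => absurd ⟨h, h'⟩ hi⟩
  have hv : ∀ i, ∃ v, 1 ≤ i → i < L.length →
      Sim σ ρ ((f i).p ++ (f i).x ++ (f i).q) (v ++ (f (i + 1)).p) := by
    intro i
    by_cases hi : 1 ≤ i ∧ i < L.length
    · obtain ⟨-, ⟨v, hv⟩, -⟩ := hlink i hi.1 hi.2
      exact ⟨v, fun _ _ => sim_iff.2 ⟨_, (hmem i hi.1 hi.2.le).2, hv⟩⟩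
    · exact ⟨[], fun h h' => absurd ⟨h, h'⟩ hi⟩
  choose u hu using hu
  choose v hv using hv
  have hp1 : (f 1).p = [] := by
    rw [hfi 1 le_rfl hpos]
    exact hL.hd _ (by simp [List.head?_eq_getElem?])
  have hqn : (f L.length).q = [] := by
    rw [hfi _ hpos le_rfl]
    exact hL.lst _ (by
      rw [Option.mem_def, List.getLast?_eq_getElem?]; exact List.getElem?_eq_getElem _)
  refine ⟨L.length, hpos, hLn, fun i => (f i).x, fun i => (f i).p, fun i => (f i).q,
    ⟨hpos, fun i hi h => (hmem i hi h).1, ⟨u, v, hu, hv⟩, fun i hi h => (hlink i hi h).2.2,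
      hp1, hqn, ?_⟩, ?_⟩
  · intro h1
    have := (hmem 1 le_rfl hpos).2
    rw [h1] at hqn
    exact mem_DTau_iff.2 ⟨_, by simpa [hp1, hqn] using this⟩
  · have : (List.range' 1 L.length).map (fun i => (f i).x) = L.map Member.x := by
      apply List.ext_getElem
      · simp
      · intro i h1 h2
        simp only [List.length_map] at h2
        simp only [List.getElem_map, List.getElem_range', one_mul]
        rw [hfi (1 + i) (by omega) (by omega)]
        simp
    rw [wordSeg, this, word]

/-! ### Finiteness -/

lemma finite_flatten {F : Set (List A)} (hF : F.Finite) (n : ℕ) :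
    {z | ∃ l : List (List A), l.length ≤ n ∧ (∀ x ∈ l, x ∈ F) ∧ z = l.flatten}.Finite := by
  induction n with
  | zero =>
    refine (Set.finite_singleton []).subset ?_
    rintro z ⟨l, hl, -, rfl⟩
    obtain rfl : l = [] := List.length_eq_zero_iff.1 (by omega)
    simp
  | succ n ih =>
    refine ((Set.finite_singleton []).union (hF.image2 (· ++ ·) ih)).subset ?_
    rintro z ⟨l, hl, hlF, rfl⟩
    cases l with
    | nil => exact Or.inl rfl
    | cons x l =>
      exact Or.inr ⟨x, hlF x (by simp), l.flatten,
        ⟨l, by simpa using hl, fun y hy => hlF y (by simp [hy]), rfl⟩, by simp⟩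

/-- `Lin(n)` is finite, since the members of a decomposition are factors of words of the finite
set `D_τ`. -/
lemma finite_LinSet {E σ ρ : List A → List A → Prop} (hE : IsCongClasses E (classOf σ ρ))
    (hfin : (DTau σ ρ).Finite) (n : ℕ) : (LinSet σ ρ n).Finite := by
  have hF : (⋃ d ∈ DTau σ ρ, {x : List A | x ∈ d.sublists}).Finite :=
    hfin.biUnion fun d _ => List.finite_toSet _
  refine (finite_flatten hF n).subset ?_
  intro w hw
  obtain ⟨L, hLn, hL, rfl⟩ := exists_decomp hE hw
  refine ⟨L.map Member.x, by simpa using hLn, ?_, rfl⟩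
  intro x hx
  obtain ⟨M, hM, rfl⟩ := List.mem_map.1 hx
  simp only [Set.mem_iUnion]
  refine ⟨_, mem_DTau_iff.2 ⟨_, (hL.mem M hM).2⟩, ?_⟩
  simp only [Set.mem_ofPred_eq, List.mem_sublists]
  exact (List.infix_append M.p M.x M.q).sublist

lemma mem_class_of_rel {σ ρ : List A → List A → Prop} {a b : List A}
    (h : PiRel σ ρ a b) : ∃ t, classOf σ ρ t a ∧ classOf σ ρ t b := by
  rcases h with h | h
  · exact ⟨true, ⟨a, ⟨b, Or.inl h⟩, .refl⟩, ⟨b, ⟨a, Or.inr h⟩, .refl⟩⟩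
  · exact ⟨false, ⟨a, ⟨b, Or.inl h⟩, .refl⟩, ⟨b, ⟨a, Or.inr h⟩, .refl⟩⟩

lemma oneStep_mem_LinSet {σ ρ : List A → List A → Prop}
    (hE : IsCongClasses (EqRel (PiRel σ ρ)) (classOf σ ρ)) {n : ℕ} {w z : List A}
    (hsf : SFRel (PiRel σ ρ) w) (hw : w ∈ LinSet σ ρ n) (h : OneStep (PiRel σ ρ) w z) :
    z ∈ LinSet σ ρ n := by
  obtain ⟨r, s, y, y', rfl, rfl, hyy⟩ := h
  obtain ⟨T, hT, hT'⟩ : ∃ t, classOf σ ρ t y ∧ classOf σ ρ t y' := by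
    rcases hyy with h | h
    · exact mem_class_of_rel h
    · exact (mem_class_of_rel h).imp fun _ => And.symm
  -- If the empty word could be rewritten into `c`, it could also be inserted twice.
  have key : ∀ c, classOf σ ρ T [] → classOf σ ρ T c → c = [] := by
    intro c h0 hc
    have hs1 := hE.cls h0 hc
    have h1 := hE.step hs1 (r ++ y ++ s) [] (w := r ++ y ++ s) (by simp) rfl
    have h2 := hE.step hs1 (r ++ y ++ s ++ c) [] (w := r ++ y ++ s ++ c ++ []) (by simp) rfl
    exact hsf _ (hE.trans h1 h2) (r ++ y ++ s) c [] rfl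
  by_cases hy : y = []
  · subst hy
    rwa [key y' hT hT']
  by_cases hy' : y' = []
  · subst hy'
    exact absurd (key y hT' hT) hy
  obtain ⟨L, hLn, hL, hwL⟩ := exists_decomp hE hw
  obtain ⟨K, hK0, hKn, hK, hKw⟩ := rewrite_factor hE hL (hwL ▸ hsf) hwL.symm hy hy' hT hT'
  rw [← hKw]
  exact mem_LinSet_of_decomp hK0 (hKn.trans hLn) hK

/-- Corollary: the class of a word square-free relative to `π` and
linearly decomposable of order `n` is finite and consists of words in `Lin(n)`. -/
theorem class_of_lin_sqfree {A : Type*} {nu nv : ℕ}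
    (u : Fin nu → List A) (v : Fin nv → List A)
    (hu : Function.Injective u) (hv : Function.Injective v)
    (σ ρ : List A → List A → Prop) (hσ : σ = FamilyRel u) (hρ : ρ = FamilyRel v)
    (hset : SettingHyps σ ρ)
    (n : ℕ) (w : List A)
    (hsf : SFRel (PiRel σ ρ) w) (hlin : w ∈ LinSet σ ρ n) :
    {z | EqRel (PiRel σ ρ) w z}.Finite ∧
      ∀ z, EqRel (PiRel σ ρ) w z → z ∈ LinSet σ ρ n := by
  subst hσ hρ
  have hE := isCongClasses u v hset
  have hall : ∀ z, EqRel (PiRel (FamilyRel u) (FamilyRel v)) w z →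
      z ∈ LinSet (FamilyRel u) (FamilyRel v) n := by
    intro z hz
    induction hz with
    | refl => exact hlin
    | tail hwb hst ih =>
      exact oneStep_mem_LinSet hE (fun z hz => hsf z (hwb.trans hz)) ih hst
  exact ⟨(finite_LinSet hE (hset.1.union hset.2.1) n).subset hall, hall⟩
end SqFreePaper
end
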